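/- arXiv:1606.01091 — 2 statements merged into one kernel-verified Lean document; each statement's English description precedes it below -/
import Mathlib

section
/- Let (G(L),s,t,c) be a temporal flow network with unbounded node buffers and let f be a temporal flow in it. If the value v(f) of f is strictly positive, then there exists at least one s→t journey in G(L). Equivalently, if S is a temporal cut separating s and t and all time-edges of S are removed from the network, then every temporal flow in the resulting network has value 0. -/
open Finset

/-- A temporal flow network on a finite vertex set: a labelling `L` assigning to every
ordered pair of vertices (an edge exists iff its label set is nonempty) a finite set of
positive integer availability times, a source `s` with no incoming time-edges, a sink `t`
with no outgoing time-edges, and a positive capacity on every edge. Node buffers are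
unbounded. -/
structure TempFlowNet (V : Type*) [Fintype V] [DecidableEq V] where
  L : V → V → Finset ℕ
  s : V
  t : V
  c : V → V → ℝ
  c_pos : ∀ u v, (L u v).Nonempty → 0 < c u v
  labels_pos : ∀ u v, ∀ l ∈ L u v, 0 < l
  no_into_source : ∀ u, L u s = ∅
  no_out_of_sink : ∀ u, L t u = ∅

variable {V : Type*} [Fintype V] [DecidableEq V]

/-- A temporal flow: a nonnegative amount on each time-edge, at most the capacity,
vanishing outside the available labels, and such that at every vertex other than the
source and the sink, the total flow sent out on time-edges with label `≤ l` never exceeds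
the total flow received on time-edges with label `< l`. -/
structure IsTempFlow (N : TempFlowNet V) (f : V → V → ℕ → ℝ) : Prop where
  nonneg : ∀ u v l, 0 ≤ f u v l
  le_cap : ∀ u v l, f u v l ≤ N.c u v
  supported : ∀ u v l, l ∉ N.L u v → f u v l = 0
  conservation : ∀ v, v ≠ N.s → v ≠ N.t → ∀ l : ℕ,
    ∑ w, ∑ l' ∈ (N.L v w).filter (fun x => x ≤ l), f v w l' ≤
      ∑ w, ∑ l' ∈ (N.L w v).filter (fun x => x < l), f w v l'

/-- The value of a temporal flow: the total flow arriving at the sink. -/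
def flowValue (N : TempFlowNet V) (f : V → V → ℕ → ℝ) : ℝ :=
  ∑ w, ∑ l ∈ N.L w N.t, f w N.t l

/-- There is a journey from `u` to `v`: a sequence of time-edges, consecutive in the graph,
each available at its label, with strictly increasing labels. -/
def HasJourney (N : TempFlowNet V) (u v : V) : Prop :=
  ∃ (k : ℕ) (p : Fin (k + 2) → V) (ℓ : Fin (k + 1) → ℕ),
    p 0 = u ∧ p (Fin.last (k + 1)) = v ∧
    (∀ i : Fin (k + 1), ℓ i ∈ N.L (p i.castSucc) (p i.succ)) ∧
    StrictMono ℓ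

/-- There is a journey from `u` to `v` using no time-edge of `S`. -/
def HasJourneyAvoiding (N : TempFlowNet V) (S : Set (V × V × ℕ)) (u v : V) : Prop :=
  ∃ (k : ℕ) (p : Fin (k + 2) → V) (ℓ : Fin (k + 1) → ℕ),
    p 0 = u ∧ p (Fin.last (k + 1)) = v ∧
    (∀ i : Fin (k + 1), ℓ i ∈ N.L (p i.castSucc) (p i.succ)) ∧
    StrictMono ℓ ∧
    ∀ i : Fin (k + 1), (p i.castSucc, p i.succ, ℓ i) ∉ S

/-- A temporal cut separating `s` and `t`: a set of time-edges of the network whose removal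
leaves no `s → t` journey. -/
def IsTemporalCut (N : TempFlowNet V) (S : Set (V × V × ℕ)) : Prop :=
  (∀ e ∈ S, e.2.2 ∈ N.L e.1 e.2.1) ∧ ¬ HasJourneyAvoiding N S N.s N.t

/-!
A time-edge carrying positive flow can be traced backwards: unless it leaves the source,
conservation at its tail provides a time-edge with a strictly smaller label that carries positive
flow into that tail. Labels cannot decrease forever, so the trace started at the sink ends at the
source; read forwards, it is a journey carrying positive flow on every time-edge. In particular it
avoids every set of time-edges on which the flow vanishes.
-/

section Journey

variable {α T : Type*} [Preorder T] {E : α → α → T → Prop} {u v w : α} {l : T} {k : ℕ}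
  {p : Fin (k + 2) → α} {ℓ : Fin (k + 1) → T}

/-- A journey from `u` to `v` with vertices `p` and labels `ℓ` whose time-edges `(x, y, l)` all
satisfy `E x y l`; the time-edges carrying positive flow are the `E` of interest. As in
`HasJourney`, there is at least one time-edge. -/
structure IsJourney (E : α → α → T → Prop) (u v : α) {k : ℕ} (p : Fin (k + 2) → α)
    (ℓ : Fin (k + 1) → T) : Prop where
  source : p 0 = u
  target : p (Fin.last (k + 1)) = v
  step : ∀ i, E (p i.castSucc) (p i.succ) (ℓ i)
  strictMono : StrictMono ℓ

namespace IsJourney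

lemma single (h : E u v l) : IsJourney E u v ![u, v] ![l] where
  source := rfl
  target := rfl
  step := Fin.forall_fin_one.2 h
  strictMono := Subsingleton.strictMono (α := Fin 1) _

lemma snoc (hJ : IsJourney E u v p ℓ) (h : E v w l) (hl : ℓ (Fin.last k) < l) :
    IsJourney E u w (Fin.snoc p w : Fin (k + 3) → α) (Fin.snoc ℓ l : Fin (k + 2) → T) where
  source := by rw [Fin.snoc_apply_zero, hJ.source]
  target := Fin.snoc_last ..
  step := by
    simpa only [Fin.forall_fin_succ' (n := k + 1), Fin.succ_castSucc, Fin.succ_last,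
      Fin.snoc_castSucc, Fin.snoc_last, hJ.target] using ⟨hJ.step, h⟩
  strictMono := by
    rw [Fin.strictMono_iff_lt_succ, Fin.forall_fin_succ']
    simpa only [Fin.succ_castSucc, Fin.succ_last, Fin.snoc_castSucc, Fin.snoc_last]
      using ⟨Fin.strictMono_iff_lt_succ.1 hJ.strictMono, hl⟩

end IsJourney

lemma exists_isJourney_of_exists_pred [WellFoundedLT T] {s : α}
    (hpred : ∀ ⦃u v l⦄, E u v l → u ≠ s → ∃ w, ∃ m < l, E w u m) (h : E u v l) :
    ∃ (k : ℕ) (p : Fin (k + 2) → α) (ℓ : Fin (k + 1) → T),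
      IsJourney E s v p ℓ ∧ ℓ (Fin.last k) = l := by
  induction l using WellFoundedLT.induction generalizing u v with
  | ind l ih =>
    obtain rfl | hu := eq_or_ne u s
    · exact ⟨0, _, _, .single h, rfl⟩
    · obtain ⟨w, m, hml, hwu⟩ := hpred h hu
      obtain ⟨k, p, ℓ, hJ, rfl⟩ := ih m hml hwu
      exact ⟨k + 1, _, _, hJ.snoc h hml, Fin.snoc_last ..⟩

end Journey

lemma sum_sum_pos_iff_of_nonneg {ι κ M : Type*} [AddCommMonoid M] [PartialOrder M]
    [AddLeftMono M] {A : Finset ι} {B : ι → Finset κ} {g : ι → κ → M}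
    (hg : ∀ i ∈ A, ∀ j ∈ B i, 0 ≤ g i j) :
    0 < ∑ i ∈ A, ∑ j ∈ B i, g i j ↔ ∃ i ∈ A, ∃ j ∈ B i, 0 < g i j := by
  rw [sum_pos_iff_of_nonneg fun i hi => sum_nonneg (hg i hi)]
  exact exists_congr fun i => and_congr_right fun hi => sum_pos_iff_of_nonneg (hg i hi)

namespace IsTempFlow

variable {N : TempFlowNet V} {f : V → V → ℕ → ℝ} {u v : V} {l : ℕ}

lemma mem_of_pos (hf : IsTempFlow N f) (h : 0 < f u v l) : l ∈ N.L u v :=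
  not_imp_comm.1 (hf.supported u v l) h.ne'

lemma tail_ne_sink_of_pos (hf : IsTempFlow N f) (h : 0 < f u v l) : u ≠ N.t := by
  rintro rfl
  simpa [N.no_out_of_sink] using hf.mem_of_pos h

lemma exists_earlier_pos_of_pos (hf : IsTempFlow N f) (h : 0 < f u v l) (hu : u ≠ N.s) :
    ∃ w, ∃ m < l, 0 < f w u m := by
  have outflow_pos : 0 < ∑ w, ∑ m ∈ (N.L u w).filter (fun x => x ≤ l), f u w m :=
    (sum_sum_pos_iff_of_nonneg fun w _ m _ => hf.nonneg u w m).2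
      ⟨v, mem_univ v, l, mem_filter.2 ⟨hf.mem_of_pos h, le_rfl⟩, h⟩
  have inflow_pos := outflow_pos.trans_le (hf.conservation u hu (hf.tail_ne_sink_of_pos h) l)
  obtain ⟨w, -, m, hm, hpos⟩ :=
    (sum_sum_pos_iff_of_nonneg fun w _ m _ => hf.nonneg w u m).1 inflow_pos
  exact ⟨w, m, (mem_filter.1 hm).2, hpos⟩

lemma flowValue_nonneg (hf : IsTempFlow N f) : 0 ≤ flowValue N f :=
  sum_nonneg fun w _ => sum_nonneg fun l _ => hf.nonneg w N.t l

lemma exists_isJourney_of_flowValue_pos (hf : IsTempFlow N f) (h : 0 < flowValue N f) :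
    ∃ (k : ℕ) (p : Fin (k + 2) → V) (ℓ : Fin (k + 1) → ℕ),
      IsJourney (fun u v l => 0 < f u v l) N.s N.t p ℓ := by
  obtain ⟨w, -, l, -, hpos⟩ :=
    (sum_sum_pos_iff_of_nonneg fun w _ l _ => hf.nonneg w N.t l).1 h
  obtain ⟨k, p, ℓ, hJ, -⟩ :=
    exists_isJourney_of_exists_pred (fun _ _ _ => hf.exists_earlier_pos_of_pos) hpos
  exact ⟨k, p, ℓ, hJ⟩

end IsTempFlow

/-- If a temporal flow has strictly positive value, then the network has an `s → t`
journey.  Equivalently, if `S` is a temporal cut separating `s` and `t`, then every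
temporal flow in the network obtained by removing the time-edges of `S` (i.e. every
temporal flow sending zero flow on all time-edges of `S`) has value `0`. -/
theorem positive_flow_needs_journey (N : TempFlowNet V) :
    (∀ f : V → V → ℕ → ℝ, IsTempFlow N f → 0 < flowValue N f → HasJourney N N.s N.t) ∧
    (∀ S : Set (V × V × ℕ), IsTemporalCut N S →
      ∀ f : V → V → ℕ → ℝ, IsTempFlow N f →
        (∀ u v l, (u, v, l) ∈ S → f u v l = 0) → flowValue N f = 0) := by
  refine ⟨fun f hf hpos => ?_, fun S hS f hf hfS => ?_⟩
  · obtain ⟨k, p, ℓ, hJ⟩ := hf.exists_isJourney_of_flowValue_pos hpos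
    exact ⟨k, p, ℓ, hJ.source, hJ.target, fun i => hf.mem_of_pos (hJ.step i), hJ.strictMono⟩
  · refine (hf.flowValue_nonneg.eq_or_lt.resolve_right fun hpos => hS.2 ?_).symm
    obtain ⟨k, p, ℓ, hJ⟩ := hf.exists_isJourney_of_flowValue_pos hpos
    exact ⟨k, p, ℓ, hJ.source, hJ.target, fun i => hf.mem_of_pos (hJ.step i), hJ.strictMono,
      fun i hi => (hJ.step i).ne' (hfS _ _ _ hi)⟩
end

section
/- Let G be a directed graph with source s and sink t, let C₁ and C₂ be s–t cuts (sets of edges meeting every directed s→t path) with C₁ preceding C₂ (every directed s→t path that goes through an edge of C₁ must later go through an edge of C₂), and assign labels to the edges of G. If every label assigned to an edge of C₁ is at least α/2 and every label assigned to an edge of C₂ is at most α/2, then G contains no s→t journey. -/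
/-- A directed path with `k` edges from `s` to `t` in the digraph `G`, given by its
sequence of vertices. -/
def IsPath {V : Type*} (G : V → V → Prop) (s t : V) {k : ℕ} (p : Fin (k + 1) → V) : Prop :=
  p 0 = s ∧ p (Fin.last k) = t ∧ ∀ i : Fin k, G (p i.castSucc) (p i.succ)

/-- `C` is an `s`–`t` cut: every directed `s → t` path goes through an edge of `C`. -/
def IsCut {V : Type*} (G : V → V → Prop) (s t : V) (C : Set (V × V)) : Prop :=
  ∀ (k : ℕ) (p : Fin (k + 1) → V), IsPath G s t p →
    ∃ i : Fin k, (p i.castSucc, p i.succ) ∈ C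

/-- `C₁` precedes `C₂`: any directed `s → t` path that goes through an edge of `C₁` must
later go through an edge of `C₂`. -/
def Precedes {V : Type*} (G : V → V → Prop) (s t : V) (C₁ C₂ : Set (V × V)) : Prop :=
  ∀ (k : ℕ) (p : Fin (k + 1) → V), IsPath G s t p →
    ∀ i : Fin k, (p i.castSucc, p i.succ) ∈ C₁ →
      ∃ j : Fin k, i < j ∧ (p j.castSucc, p j.succ) ∈ C₂

theorem IsCut.exists_mem_lt_mem_of_precedes {V : Type*} {G : V → V → Prop} {s t : V}
    {C₁ C₂ : Set (V × V)} (hC₁ : IsCut G s t C₁) (hprec : Precedes G s t C₁ C₂)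
    {k : ℕ} {p : Fin (k + 1) → V} (hp : IsPath G s t p) :
    ∃ i j : Fin k, i < j ∧ (p i.castSucc, p i.succ) ∈ C₁ ∧ (p j.castSucc, p j.succ) ∈ C₂ := by
  obtain ⟨i, hi⟩ := hC₁ k p hp
  obtain ⟨j, hij, hj⟩ := hprec k p hp i hi
  exact ⟨i, j, hij, hi, hj⟩

theorem no_journey_of_preceding_cuts_general {V β : Type*} [Preorder β] {G : V → V → Prop}
    {s t : V} {lab : V → V → β} {C₁ C₂ : Set (V × V)}
    (hC₁ : IsCut G s t C₁) (hprec : Precedes G s t C₁ C₂)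
    (hlab : ∀ e₁ ∈ C₁, ∀ e₂ ∈ C₂, ¬ lab e₁.1 e₁.2 < lab e₂.1 e₂.2) :
    ¬ ∃ (k : ℕ) (p : Fin (k + 1) → V), IsPath G s t p ∧
        StrictMono fun i : Fin k => lab (p i.castSucc) (p i.succ) := by
  rintro ⟨k, p, hp, hmono⟩
  obtain ⟨i, j, hij, hi, hj⟩ := hC₁.exists_mem_lt_mem_of_precedes hprec hp
  exact hlab _ hi _ hj (hmono hij)

/-- Let `C₁` and `C₂` be `s`–`t` cuts with `C₁` preceding `C₂`, and label the edges of `G`.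
If every edge of `C₁` has label at least `α/2` and every edge of `C₂` has label at most
`α/2`, then `G` contains no `s → t` journey, i.e. no directed `s → t` path with strictly
increasing labels along its edges. -/
theorem no_journey_of_preceding_cuts {V : Type*} (G : V → V → Prop) (s t : V)
    (lab : V → V → ℕ) (α : ℕ) (hα : Even α) (hαpos : 0 < α)
    (C₁ C₂ : Set (V × V))
    (hC₁ : IsCut G s t C₁) (hC₂ : IsCut G s t C₂)
    (hprec : Precedes G s t C₁ C₂)
    (h₁ : ∀ e ∈ C₁, α / 2 ≤ lab e.1 e.2)
    (h₂ : ∀ e ∈ C₂, lab e.1 e.2 ≤ α / 2) :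
    ¬ ∃ (k : ℕ) (p : Fin (k + 1) → V), IsPath G s t p ∧
        StrictMono fun i : Fin k => lab (p i.castSucc) (p i.succ) :=
  no_journey_of_preceding_cuts_general hC₁ hprec fun e₁ he₁ e₂ he₂ ↦
    not_lt_of_ge ((h₂ e₂ he₂).trans (h₁ e₁ he₁))
end
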